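/- For every integer r ≥ 3, the supremum of Θ(C_{d,q}) over all pairs of positive integers (q,d) with q ≥ 2d and q/d < r equals r. Consequently, since Θ(C_{d,q}) depends only on q/d, is nondecreasing in q/d, and equals r when q/d = r, the function q/d ↦ Θ(C_{d,q}) is continuous at every integer point q/d = r ≥ 3. -/

import Mathlib

/-- The circular (Lee) distance on `ℤ/qℤ`: `δ(x,y) = min(|x-y|, q-|x-y|)`,
with representatives taken in `{0,…,q-1}`. -/
def circDist (q : ℕ) (x y : ZMod q) : ℕ := min (x - y).val (y - x).val

/-- `α(C_{d,q}^{⊠n})`: the maximum cardinality of a set `S ⊆ (ℤ/qℤ)ⁿ` such that any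
two distinct elements of `S` differ by at least `d` in circular distance in some
coordinate. -/
noncomputable def circAlpha (q d n : ℕ) : ℕ :=
  sSup {k : ℕ | ∃ S : Finset (Fin n → ZMod q),
    (∀ u ∈ S, ∀ v ∈ S, u ≠ v → ∃ i : Fin n, d ≤ circDist q (u i) (v i)) ∧ S.card = k}

/-- The Shannon capacity `Θ(C_{d,q}) = sup_{n ≥ 1} α(C_{d,q}^{⊠n})^{1/n}`. -/
noncomputable def circTheta (q d : ℕ) : ℝ :=
  ⨆ n : ℕ, (circAlpha q d (n + 1) : ℝ) ^ (((n : ℝ) + 1)⁻¹)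

/-!
Volume bounds give `Θ(C_{d,q}) ≤ q/d`, and the rounding `x ↦ ⌊qx/q'⌋` shows that `Θ` is
nondecreasing in `q/d`, so it suffices to find fractions `q/d < r` with `Θ(C_{d,q})` close to `r`.

Let `N₀ = 1` and `Nₙ₊₁ = r Nₙ - 1`. The words `(t, rt, …, rⁿt)`, `t ∈ ℤ/N` with `N = Nₙ₊₁`, form an
independent set for `d = Nₙ` and `q = N`. Indeed, if every `rⁱt` is at distance less than `Nₙ` from
`0`, then the first `n + 1` base-`r` digits of `t/N` all are `0` or `r - 1`, so that
`⌊rⁿ⁺¹t/N⌋ = (r - 1)B`. As `(r - 1)N ≡ 1` modulo `rⁿ⁺¹`, the number `B + (rⁿ⁺¹t mod N) < rⁿ⁺¹` is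
divisible by `rⁿ⁺¹`, which forces `t = 0`. Finally `Nₙ ≥ rⁿ/2`, so `Nₙ` has `n`-th root tending to
`r`.
-/

section CircDist

variable {q : ℕ}

lemma circDist_comm (x y : ZMod q) : circDist q x y = circDist q y x :=
  min_comm _ _

lemma circDist_self (x : ZMod q) : circDist q x x = 0 := by
  simp [circDist]

lemma circDist_sub_zero (x y : ZMod q) : circDist q (x - y) 0 = circDist q x y := by
  simp [circDist]

lemma circDist_natCast {a b : ℕ} (hba : b ≤ a) (ha : a < q) :
    circDist q (a : ZMod q) (b : ZMod q) = min (a - b) (q - (a - b)) := by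
  have : NeZero q := ⟨by lia⟩
  have hval : ((a : ZMod q) - b).val = a - b := by
    rw [← Nat.cast_sub hba, ZMod.val_natCast_of_lt (by lia)]
  rw [circDist, ← neg_sub (a : ZMod q) b, ZMod.neg_val, hval]
  split_ifs with h
  · simp [← hval, h]
  · rfl

lemma circDist_lt_of_add_natCast_eq {d a b : ℕ} {x y : ZMod q} (ha : a < d) (hb : b < d)
    (h : x + a = y + b) : circDist q x y < d := by
  wlog hab : a ≤ b generalizing a b x y
  · rw [circDist_comm]
    exact this hb ha h.symm (by lia)
  have hxy : x - y = ((b - a : ℕ) : ZMod q) := by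
    rw [Nat.cast_sub hab]
    linear_combination h
  calc circDist q x y ≤ (x - y).val := min_le_left _ _
    _ = (b - a) % q := by rw [hxy, ZMod.val_natCast]
    _ ≤ b - a := Nat.mod_le _ _
    _ < d := by lia

lemma le_circDist_natCast_mul_div [NeZero q] {q' d d' a b : ℕ} (h : q' * d ≤ q * d')
    (ha : a < q') (hb : b < q') (hab : d' ≤ circDist q' (a : ZMod q') (b : ZMod q')) :
    d ≤ circDist q ((q * a / q' : ℕ) : ZMod q) ((q * b / q' : ℕ) : ZMod q) := by
  wlog hba : b ≤ a generalizing a b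
  · rw [circDist_comm] at hab ⊢
    exact this hb ha hab (by lia)
  have hq' : 0 < q' := by lia
  rw [circDist_natCast hba ha, le_min_iff] at hab
  have hlower : q * b / q' + d ≤ q * a / q' := by
    rw [← Nat.add_mul_div_left _ _ hq']
    refine Nat.div_le_div_right ?_
    calc q * b + q' * d ≤ q * (b + d') := by rw [mul_add]; lia
      _ ≤ q * a := Nat.mul_le_mul_left q (by lia)
  have hupper : q * a / q' + d ≤ q * b / q' + q := by
    rw [← Nat.add_mul_div_left _ _ hq', ← Nat.add_mul_div_left _ _ hq']
    refine Nat.div_le_div_right ?_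
    calc q * a + q' * d ≤ q * (a + d') := by rw [mul_add]; lia
      _ ≤ q * (b + q') := Nat.mul_le_mul_left q (by lia)
      _ = q * b + q' * q := by ring
  have hlt : q * a / q' < q :=
    Nat.div_lt_of_lt_mul (by rw [mul_comm]; exact Nat.mul_lt_mul_of_pos_right ha (NeZero.pos q))
  rw [circDist_natCast (by lia) hlt]
  exact le_min (by lia) (by lia)

end CircDist

/-- `S` is an independent set of the strong power `C_{d,q}^{⊠n}`; the maximal cardinality of such
sets is `circAlpha q d n`. -/
def IsCircIndep (q d : ℕ) {n : ℕ} (S : Finset (Fin n → ZMod q)) : Prop :=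
  ∀ u ∈ S, ∀ v ∈ S, u ≠ v → ∃ i : Fin n, d ≤ circDist q (u i) (v i)

section CircAlpha

variable {q d n : ℕ}

-- The boxes `u + [0, d)ⁿ`, `u ∈ S`, are pairwise disjoint.
lemma IsCircIndep.card_mul_pow_le [NeZero q] {S : Finset (Fin n → ZMod q)}
    (hS : IsCircIndep q d S) (hdq : d ≤ q) : S.card * d ^ n ≤ q ^ n := by
  have hinj : Function.Injective
      fun (p : S × (Fin n → Fin d)) i ↦ p.1.1 i + ((p.2 i : ℕ) : ZMod q) := by
    rintro ⟨⟨u, hu⟩, a⟩ ⟨⟨v, hv⟩, b⟩ hab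
    replace hab (i) : u i + ((a i : ℕ) : ZMod q) = v i + ((b i : ℕ) : ZMod q) := congrFun hab i
    obtain rfl : u = v := by
      by_contra huv
      obtain ⟨i, hi⟩ := hS u hu v hv huv
      exact hi.not_gt (circDist_lt_of_add_natCast_eq (a i).2 (b i).2 (hab i))
    obtain rfl : a = b := by
      funext i
      have hmod := (ZMod.natCast_eq_natCast_iff' _ _ _).mp (add_left_cancel (hab i))
      rwa [Nat.mod_eq_of_lt ((a i).2.trans_le hdq), Nat.mod_eq_of_lt ((b i).2.trans_le hdq),
        ← Fin.ext_iff] at hmod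
    rfl
  simpa [ZMod.card] using Fintype.card_le_of_injective _ hinj

lemma bddAbove_card_isCircIndep [NeZero q] :
    BddAbove {k : ℕ | ∃ S : Finset (Fin n → ZMod q), IsCircIndep q d S ∧ S.card = k} := by
  refine ⟨Fintype.card (Fin n → ZMod q), ?_⟩
  rintro _ ⟨S, -, rfl⟩
  exact S.card_le_univ

lemma IsCircIndep.card_le_circAlpha [NeZero q] {S : Finset (Fin n → ZMod q)}
    (hS : IsCircIndep q d S) : S.card ≤ circAlpha q d n :=
  le_csSup bddAbove_card_isCircIndep ⟨S, hS, rfl⟩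

lemma exists_isCircIndep_card_eq_circAlpha [NeZero q] :
    ∃ S : Finset (Fin n → ZMod q), IsCircIndep q d S ∧ S.card = circAlpha q d n := by
  have hne : {k : ℕ | ∃ S : Finset (Fin n → ZMod q), IsCircIndep q d S ∧ S.card = k}.Nonempty :=
    ⟨0, ∅, by simp [IsCircIndep], rfl⟩
  exact Nat.sSup_mem hne bddAbove_card_isCircIndep

lemma card_le_circAlpha_of_pairwise [NeZero q] (hd : 0 < d) {ι : Type*} [Fintype ι]
    (f : ι → Fin n → ZMod q) (hf : Pairwise fun s t ↦ ∃ i, d ≤ circDist q (f s i) (f t i)) :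
    Fintype.card ι ≤ circAlpha q d n := by
  have hinj : Function.Injective f := by
    intro s t hst
    by_contra hne
    obtain ⟨i, hi⟩ := hf hne
    rw [hst, circDist_self] at hi
    lia
  have hindep : IsCircIndep q d (Finset.univ.map ⟨f, hinj⟩) := by
    intro u hu v hv huv
    obtain ⟨s, -, rfl⟩ := Finset.mem_map.mp hu
    obtain ⟨t, -, rfl⟩ := Finset.mem_map.mp hv
    exact hf (ne_of_apply_ne _ huv)
  simpa using hindep.card_le_circAlpha

lemma circAlpha_mono [NeZero q] {q' d' : ℕ} [NeZero q'] (hd : 0 < d) (h : q' * d ≤ q * d') :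
    circAlpha q' d' n ≤ circAlpha q d n := by
  obtain ⟨S, hS, hcard⟩ := exists_isCircIndep_card_eq_circAlpha (q := q') (d := d') (n := n)
  rw [← hcard, ← Fintype.card_coe]
  refine card_le_circAlpha_of_pairwise hd (fun u i ↦ ((q * (u.1 i).val / q' : ℕ) : ZMod q)) ?_
  intro u v huv
  obtain ⟨i, hi⟩ := hS u u.2 v v.2 (Subtype.coe_ne_coe.mpr huv)
  exact ⟨i, le_circDist_natCast_mul_div h (ZMod.val_lt _) (ZMod.val_lt _) (by simpa using hi)⟩

lemma circAlpha_le_pow [NeZero q] : circAlpha q d n ≤ q ^ n := by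
  obtain ⟨S, -, hcard⟩ := exists_isCircIndep_card_eq_circAlpha (q := q) (d := d) (n := n)
  simpa [← hcard, ZMod.card] using S.card_le_univ

lemma circAlpha_le_div_pow (hd : 0 < d) (hdq : d ≤ q) :
    (circAlpha q d n : ℝ) ≤ ((q : ℝ) / d) ^ n := by
  have : NeZero q := ⟨by lia⟩
  obtain ⟨S, hS, hcard⟩ := exists_isCircIndep_card_eq_circAlpha (q := q) (d := d) (n := n)
  rw [div_pow, le_div_iff₀ (by positivity), ← hcard]
  exact_mod_cast hS.card_mul_pow_le hdq

end CircAlpha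

section CircTheta

variable {q d : ℕ}

lemma bddAbove_range_circAlpha_rpow_inv [NeZero q] :
    BddAbove (Set.range fun n : ℕ ↦ (circAlpha q d (n + 1) : ℝ) ^ ((n : ℝ) + 1)⁻¹) := by
  refine ⟨q, Set.forall_mem_range.mpr fun n ↦ ?_⟩
  rw [Real.rpow_inv_le_iff_of_pos (by positivity) (by positivity) (by positivity)]
  exact_mod_cast circAlpha_le_pow

lemma circTheta_le_div (hd : 0 < d) (hdq : d ≤ q) : circTheta q d ≤ (q : ℝ) / d := by
  refine ciSup_le fun n ↦ ?_
  rw [Real.rpow_inv_le_iff_of_pos (by positivity) (by positivity) (by positivity)]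
  exact_mod_cast circAlpha_le_div_pow hd hdq

lemma lt_circTheta_of_pow_lt_circAlpha [NeZero q] {ρ : ℝ} (hρ : 0 ≤ ρ) {n : ℕ}
    (h : ρ ^ (n + 1) < circAlpha q d (n + 1)) : ρ < circTheta q d := by
  refine lt_of_lt_of_le ?_ (le_ciSup bddAbove_range_circAlpha_rpow_inv n)
  rw [Real.lt_rpow_inv_iff_of_pos hρ (by positivity) (by positivity)]
  exact_mod_cast h

lemma circTheta_mono [NeZero q] {q' d' : ℕ} [NeZero q'] (hd' : 0 < d') (hd : 0 < d)
    (h : (q' : ℝ) / d' ≤ (q : ℝ) / d) : circTheta q' d' ≤ circTheta q d := by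
  rw [div_le_div_iff₀ (by positivity) (by positivity)] at h
  refine ciSup_mono bddAbove_range_circAlpha_rpow_inv fun n ↦ ?_
  gcongr
  exact circAlpha_mono hd (by exact_mod_cast h)

end CircTheta

/-- The modulus `Nₙ = rⁿ - (rⁿ⁻¹ + ⋯ + r + 1)`, given by the recursion `Nₙ₊₁ = r Nₙ - 1`. The words
`(t, rt, …, rⁿt)` over `ℤ/Nₙ₊₁` form an independent set of `C_{d,q}^{⊠(n+1)}` for `d = Nₙ` and
`q = Nₙ₊₁`. The subtraction does not truncate for `r ≥ 2`. -/
def circCodeSize (r : ℕ) : ℕ → ℕ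
  | 0 => 1
  | n + 1 => r * circCodeSize r n - 1

section CircCode

variable {r : ℕ}

lemma circCodeSize_pos (hr : 2 ≤ r) (n : ℕ) : 0 < circCodeSize r n := by
  induction n with
  | zero => exact Nat.one_pos
  | succ n ih =>
    have : 2 * 1 ≤ r * circCodeSize r n := Nat.mul_le_mul hr ih
    rw [circCodeSize]
    lia

lemma circCodeSize_succ_add_one (hr : 2 ≤ r) (n : ℕ) :
    circCodeSize r (n + 1) + 1 = r * circCodeSize r n :=
  Nat.sub_add_cancel (Nat.mul_pos (by lia) (circCodeSize_pos hr n))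

lemma circCodeSize_add_geomSum (hr : 2 ≤ r) (n : ℕ) :
    circCodeSize r n + ∑ i ∈ Finset.range n, r ^ i = r ^ n := by
  induction n with
  | zero => simp [circCodeSize]
  | succ n ih =>
    rw [geom_sum_succ, pow_succ', ← ih]
    linear_combination circCodeSize_succ_add_one hr n

lemma sub_one_mul_geomSum_add_one (hr : 1 ≤ r) (n : ℕ) :
    (r - 1) * ∑ i ∈ Finset.range n, r ^ i + 1 = r ^ n := by
  rw [mul_comm, geom_sum_mul_of_one_le hr, Nat.sub_add_cancel (Nat.one_le_pow _ _ hr)]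

lemma sub_one_mul_circCodeSize_add_pow (hr : 2 ≤ r) (n : ℕ) :
    (r - 1) * circCodeSize r n + r ^ n = (r - 1) * r ^ n + 1 := by
  linear_combination (r - 1) * circCodeSize_add_geomSum hr n +
    (sub_one_mul_geomSum_add_one (by lia : 1 ≤ r) n).symm

lemma pow_le_two_mul_circCodeSize (hr : 3 ≤ r) (n : ℕ) : r ^ n ≤ 2 * circCodeSize r n := by
  have hsum := circCodeSize_add_geomSum (by lia : 2 ≤ r) n
  have hgeom := sub_one_mul_geomSum_add_one (by lia : 1 ≤ r) n
  have htwo : 2 * ∑ i ∈ Finset.range n, r ^ i ≤ (r - 1) * ∑ i ∈ Finset.range n, r ^ i :=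
    Nat.mul_le_mul_right _ (by lia)
  lia

-- `⌊ry/N⌋` is the leading base-`r` digit of `y/N`; the hypotheses force it to be `0` or `r - 1`.
lemma sub_one_dvd_mul_div {N M y : ℕ} (hNM : N + 1 = r * M) (hyN : y < N)
    (hy : min y (N - y) < M) : r - 1 ∣ r * y / N := by
  have hr : 0 < r := Nat.pos_of_mul_pos_right (N.succ_pos.trans_eq hNM)
  rcases min_lt_iff.mp hy with hy | hy
  · have : r * y < N := by nlinarith
    simp [Nat.div_eq_of_lt this]
  · have hdigit : r * y / N = r - 1 := by
      obtain ⟨s, rfl⟩ : ∃ s, r = s + 1 := ⟨r - 1, by lia⟩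
      obtain ⟨z, rfl⟩ := Nat.exists_eq_add_of_le hyN.le
      have hz : (s + 1) * (z + 1) ≤ (s + 1) * M := Nat.mul_le_mul_left _ (by lia)
      rw [Nat.add_sub_cancel]
      exact Nat.div_eq_of_lt_le (by linarith) (by nlinarith)
    rw [hdigit]

lemma sub_one_dvd_mul_pow_div {N M t n : ℕ} (hNM : N + 1 = r * M) (htN : t < N)
    (h : ∀ i < n, min (t * r ^ i % N) (N - t * r ^ i % N) < M) : r - 1 ∣ t * r ^ n / N := by
  induction n with
  | zero => simp [Nat.div_eq_of_lt htN]
  | succ n ih =>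
    have hN : 0 < N := by lia
    have hdigits : t * r ^ (n + 1) / N = r * (t * r ^ n % N) / N + r * (t * r ^ n / N) := by
      rw [← Nat.add_mul_div_left _ _ hN]
      congr 1
      linear_combination r * (Nat.mod_add_div (t * r ^ n) N).symm
    rw [hdigits]
    exact dvd_add (sub_one_dvd_mul_div hNM (Nat.mod_lt _ hN) (h n n.lt_succ_self))
      (dvd_mul_of_dvd_right (ih fun i hi ↦ h i (hi.trans n.lt_succ_self)) r)

lemma eq_zero_of_sub_one_dvd_mul_pow_div (hr : 2 ≤ r) {n t : ℕ} (ht : t < circCodeSize r n)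
    (h : r - 1 ∣ t * r ^ n / circCodeSize r n) : t = 0 := by
  have hsum := circCodeSize_add_geomSum hr n
  have hgeom := sub_one_mul_geomSum_add_one (by lia : 1 ≤ r) n
  obtain ⟨B, hB⟩ := h
  have hρ := Nat.mod_lt (t * r ^ n) (circCodeSize_pos hr n)
  have hdiv := Nat.mod_add_div (t * r ^ n) (circCodeSize r n)
  rw [hB] at hdiv
  set ρ := t * r ^ n % circCodeSize r n
  have hB_le : B ≤ ∑ i ∈ Finset.range n, r ^ i := by
    have hlt : (r - 1) * B < r ^ n := by
      rw [← hB]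
      exact Nat.div_lt_of_lt_mul (Nat.mul_lt_mul_of_pos_right ht (by positivity))
    exact Nat.le_of_mul_le_mul_left (by lia) (by lia : 0 < r - 1)
  have hmul : (r - 1) * B * r ^ n + (B + ρ) = r ^ n * (t + B) := by
    linear_combination hdiv + B * (sub_one_mul_circCodeSize_add_pow hr n).symm
  have hdvd : r ^ n ∣ B + ρ :=
    (Nat.dvd_add_right (Nat.dvd_mul_left _ _)).mp ⟨t + B, hmul⟩
  have hzero : B + ρ = 0 := Nat.eq_zero_of_dvd_of_lt hdvd (by lia)
  obtain ⟨rfl, hρ0⟩ := Nat.add_eq_zero_iff.mp hzero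
  have : t * r ^ n = 0 := by rw [← hdiv, hρ0]; simp
  exact (Nat.mul_eq_zero.mp this).resolve_right (by positivity)

lemma exists_circCodeSize_le_circDist_mul_pow (hr : 2 ≤ r) {n : ℕ}
    {x : ZMod (circCodeSize r (n + 1))} (hx : x ≠ 0) :
    ∃ i : Fin (n + 1), circCodeSize r n ≤ circDist _ (x * (r : ZMod _) ^ (i : ℕ)) 0 := by
  have : NeZero (circCodeSize r (n + 1)) := ⟨(circCodeSize_pos hr _).ne'⟩
  by_contra! hsmall
  refine hx ((ZMod.val_eq_zero x).mp (eq_zero_of_sub_one_dvd_mul_pow_div hr x.val_lt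
    (sub_one_dvd_mul_pow_div (circCodeSize_succ_add_one hr n) x.val_lt fun i hi ↦ ?_)))
  have hi := hsmall ⟨i, hi⟩
  have hcast : x * (r : ZMod _) ^ i =
      ((x.val * r ^ i % circCodeSize r (n + 1) : ℕ) : ZMod (circCodeSize r (n + 1))) := by simp
  rw [hcast, ← Nat.cast_zero, circDist_natCast (Nat.zero_le _) (Nat.mod_lt _ (NeZero.pos _))] at hi
  simpa using hi

lemma circCodeSize_le_circAlpha (hr : 2 ≤ r) (n : ℕ) :
    circCodeSize r (n + 1) ≤ circAlpha (circCodeSize r (n + 1)) (circCodeSize r n) (n + 1) := by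
  have : NeZero (circCodeSize r (n + 1)) := ⟨(circCodeSize_pos hr _).ne'⟩
  have hcode := card_le_circAlpha_of_pairwise (circCodeSize_pos hr n)
    (fun (t : ZMod (circCodeSize r (n + 1))) (i : Fin (n + 1)) ↦ t * (r : ZMod _) ^ (i : ℕ)) <| by
      intro s t hst
      obtain ⟨i, hi⟩ := exists_circCodeSize_le_circDist_mul_pow hr (sub_ne_zero.mpr hst)
      exact ⟨i, by rwa [sub_mul, circDist_sub_zero] at hi⟩
  rwa [ZMod.card] at hcode

lemma exists_pow_lt_circCodeSize (hr : 3 ≤ r) {ρ : ℝ} (hρ : 0 ≤ ρ) (hρr : ρ < r) :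
    ∃ n, ρ ^ (n + 1) < circCodeSize r (n + 1) := by
  have hr0 : (0 : ℝ) < r := hρ.trans_lt hρr
  have hratio : ρ / r < 1 := (div_lt_one hr0).mpr hρr
  obtain ⟨n, hn⟩ := exists_pow_lt_of_lt_one (one_half_pos (α := ℝ)) hratio
  have hn' : (ρ / r) ^ (n + 1) < 1 / 2 :=
    (pow_le_pow_of_le_one (by positivity) hratio.le n.le_succ).trans_lt hn
  have hsize : (r : ℝ) ^ (n + 1) ≤ 2 * circCodeSize r (n + 1) := by
    exact_mod_cast pow_le_two_mul_circCodeSize hr (n + 1)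
  rw [div_pow, div_lt_iff₀ (by positivity)] at hn'
  exact ⟨n, by linarith⟩

lemma exists_lt_circTheta (hr : 3 ≤ r) {w : ℝ} (hw : w < r) :
    ∃ q d : ℕ, 0 < d ∧ 2 * d ≤ q ∧ q < r * d ∧ w < circTheta q d := by
  obtain ⟨n, hn⟩ := exists_pow_lt_circCodeSize hr (le_max_right w 0)
    (max_lt hw (by exact_mod_cast (by lia : 0 < r)))
  have hr2 : 2 ≤ r := by lia
  have hd := circCodeSize_pos hr2 n
  have : NeZero (circCodeSize r (n + 1)) := ⟨(circCodeSize_pos hr2 _).ne'⟩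
  have hq := circCodeSize_succ_add_one hr2 n
  have hthree : 3 * circCodeSize r n ≤ r * circCodeSize r n := Nat.mul_le_mul_right _ hr
  refine ⟨circCodeSize r (n + 1), circCodeSize r n, hd, by lia, by lia, ?_⟩
  refine (le_max_left w 0).trans_lt
    (lt_circTheta_of_pow_lt_circAlpha (le_max_right w 0) (n := n) (hn.trans_le ?_))
  exact_mod_cast circCodeSize_le_circAlpha hr2 n

end CircCode

/-- For every integer `r ≥ 3`, the supremum of `Θ(C_{d,q})` over all pairs of
positive integers `(q,d)` with `q ≥ 2d` and `q/d < r` equals `r`; consequently the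
function `q/d ↦ Θ(C_{d,q})` is continuous at the integer point `q/d = r`. -/
theorem theta_continuous_at_integers (r : ℕ) (hr : 3 ≤ r) :
    (sSup {x : ℝ | ∃ q d : ℕ, 0 < d ∧ 2 * d ≤ q ∧ q < r * d ∧ x = circTheta q d}
      = (r : ℝ))
    ∧ ∀ ε : ℝ, 0 < ε → ∃ δ : ℝ, 0 < δ ∧ ∀ q d : ℕ, 0 < d → 2 * d ≤ q →
        |(q : ℝ) / (d : ℝ) - (r : ℝ)| < δ → |circTheta q d - (r : ℝ)| < ε := by
  constructor
  · apply csSup_eq_of_forall_le_of_forall_lt_exists_gt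
    · exact ⟨_, 2, 1, by norm_num, by norm_num, by lia, rfl⟩
    · rintro _ ⟨q, d, hd, hq, hqr, rfl⟩
      refine (circTheta_le_div hd (by lia)).trans ((div_le_iff₀ (by positivity)).mpr ?_)
      exact_mod_cast hqr.le
    · intro w hw
      obtain ⟨q, d, hd, hq, hqr, hwΘ⟩ := exists_lt_circTheta hr hw
      exact ⟨_, ⟨q, d, hd, hq, hqr, rfl⟩, hwΘ⟩
  · intro ε hε
    obtain ⟨q₀, d₀, hd₀, hq₀, hqr, hΘ₀⟩ := exists_lt_circTheta hr (sub_lt_self (r : ℝ) hε)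
    have : NeZero q₀ := ⟨by lia⟩
    have hgap : (q₀ : ℝ) / d₀ < r := (div_lt_iff₀ (by positivity)).mpr (by exact_mod_cast hqr)
    refine ⟨min (r - q₀ / d₀) ε, lt_min (sub_pos.mpr hgap) hε, fun q d hd hq hδ ↦ ?_⟩
    obtain ⟨hδgap, hδε⟩ := lt_min_iff.mp hδ
    have : NeZero q := ⟨by lia⟩
    have hupper := circTheta_le_div hd (by lia : d ≤ q)
    have hlower := circTheta_mono hd₀ hd
      (by linarith [(abs_lt.mp hδgap).1] : (q₀ : ℝ) / d₀ ≤ q / d)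
    exact abs_lt.mpr ⟨by linarith, by linarith [(abs_lt.mp hδε).2]⟩
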